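/- Let G be a finite group, let (σ_j)_{j∈J} be a complete family of irreducibles for G, let M ⊆ G be a conjugacy class of involutions with representative m₀, let k ≥ 1, let (ρ_i)_{i∈T} be a complete family of irreducibles for G^k acting on spaces V_i of dimensions d_i, and for each i let B_i be an orthonormal basis of V_i. Let Λ ⊆ J, P(Λ) = Σ_{j∈Λ} d_j²/|G|, and let λ ≥ 0 be a real number with |χ_j(m₀)| ≤ λ·d_j for every j ∈ J \ Λ. Then Σ_{i∈T} (d_i²/|G|^k) · (1/d_i) Σ_{b∈B_i} | (1/|M|) Σ_{m∈M} ‖Π_m^{(i)} b‖² − 2^{-k} | ≤ λ + P(Λ), where Π_m^{(i)} = 2^{-k} Σ_{I ⊆ {1,…,k}} ρ_i(m^I). -/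

import Mathlib

noncomputable section

open scoped BigOperators InnerProductSpace

def IsUnitaryRep {G V : Type*} [Group G] [NormedAddCommGroup V] [InnerProductSpace ℂ V]
    (ρ : Representation ℂ G V) : Prop :=
  ∀ (g : G) (v w : V), ⟪ρ g v, ρ g w⟫_ℂ = ⟪v, w⟫_ℂ

def IsIrreducibleRep {G V : Type*} [Group G] [AddCommGroup V] [Module ℂ V]
    (ρ : Representation ℂ G V) : Prop :=
  (∃ v : V, v ≠ 0) ∧
    ∀ W : Submodule ℂ V, (∀ (g : G) (v : V), v ∈ W → ρ g v ∈ W) → W = ⊥ ∨ W = ⊤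

def RepIso {G V₁ V₂ : Type*} [Group G] [AddCommGroup V₁] [Module ℂ V₁]
    [AddCommGroup V₂] [Module ℂ V₂]
    (ρ₁ : Representation ℂ G V₁) (ρ₂ : Representation ℂ G V₂) : Prop :=
  ∃ e : V₁ ≃ₗ[ℂ] V₂, ∀ (g : G) (v : V₁), e (ρ₁ g v) = ρ₂ g (e v)

def repChar {G V : Type*} [Group G] [AddCommGroup V] [Module ℂ V]
    (ρ : Representation ℂ G V) (g : G) : ℂ := LinearMap.trace ℂ V (ρ g)

def IsCompleteFamily {G : Type*} [Group G] {J : Type*}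
    (W : J → Type*) [∀ j, NormedAddCommGroup (W j)] [∀ j, InnerProductSpace ℂ (W j)]
    [∀ j, FiniteDimensional ℂ (W j)]
    (σ : ∀ j, Representation ℂ G (W j)) : Prop :=
  (∀ j, IsUnitaryRep (σ j)) ∧ (∀ j, IsIrreducibleRep (σ j)) ∧
    (∀ j j', j ≠ j' → ¬ RepIso (σ j) (σ j')) ∧
    (∀ (U : Type) [AddCommGroup U] [Module ℂ U] [FiniteDimensional ℂ U]
      (τ : Representation ℂ G U), IsIrreducibleRep τ → ∃ j, RepIso τ (σ j))

def isoProj {G V : Type*} [Group G] [Fintype G] [AddCommGroup V] [Module ℂ V]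
    (d : ℕ) (χ : G → ℂ) (ρ : Representation ℂ G V) : V →ₗ[ℂ] V :=
  ((d : ℂ) / (Fintype.card G : ℂ)) • ∑ g : G, starRingEnd ℂ (χ g) • (ρ g : V →ₗ[ℂ] V)

def onI {G : Type*} [One G] {k : ℕ} (g : G) (I : Finset (Fin k)) : Fin k → G :=
  fun i => if i ∈ I then g else 1

def invProj {G V : Type*} [Group G] [AddCommGroup V] [Module ℂ V] {k : ℕ}
    (ρ : Representation ℂ (Fin k → G) V) (m : G) : V →ₗ[ℂ] V :=
  ((2 : ℂ) ^ k)⁻¹ • ∑ I : Finset (Fin k), (ρ (onI m I) : V →ₗ[ℂ] V)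

def isoProjI {G V : Type*} [Group G] [Fintype G] [AddCommGroup V] [Module ℂ V] {k : ℕ}
    (ρ : Representation ℂ (Fin k → G) V) (d : ℕ) (χ : G → ℂ) (I : Finset (Fin k)) :
    V →ₗ[ℂ] V :=
  ((d : ℂ) / (Fintype.card G : ℂ)) • ∑ g : G, starRingEnd ℂ (χ g) • (ρ (onI g I) : V →ₗ[ℂ] V)

/-!
A central element `z` of `ℂ[G]` acts on each irreducible `σ_j` by a scalar `ω_j(z)`. Since `ℂ[G]`
is semisimple, `z = ∑ j, ω_j(z) e_j` with `e_j` the isotypic idempotents, so in any unitary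
representation `⟪v, z v⟫ = ∑ j, ω_j(z) ‖e_j v‖²`. For `z` the average of `M` we have
`ω_j(z) = χ_j(m₀) / d_j`, which is at most `λ` in absolute value off `Λ` and at most `1` on `Λ`;
hence `|⟪v, z v⟫| ≤ λ + ∑ j ∈ Λ, ‖e_j v‖²` for every unit vector `v`.

Since `Π_m` is an orthogonal projection, `‖Π_m v‖²` averaged over `M` is `2^{-k} ∑ I, ⟪v, z^I v⟫`,
where `z^I` acts through `g ↦ g^I`. The term `I = ∅` contributes exactly `2^{-k}`. For `I ≠ ∅` the
map `g ↦ g^I` is injective, and as the Plancherel-weighted sum of traces reads off the coefficient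
at `1`, the mean of `‖e_j^I b‖²` is `d_j² / |G|`. Each of the `2^k - 1` remaining terms is thus at
most `λ + P(Λ)` on average.
-/

open scoped MonoidAlgebra

section Bridge

variable {G V V' : Type*} [Group G] [AddCommGroup V] [Module ℂ V] [AddCommGroup V'] [Module ℂ V']
  {ρ : Representation ℂ G V} {ρ' : Representation ℂ G V'}

lemma isIrreducibleRep_iff_isIrreducible : IsIrreducibleRep ρ ↔ ρ.IsIrreducible := by
  constructor
  · rintro ⟨⟨v, hv⟩, h⟩
    have : Nontrivial (Subrepresentation ρ) := by
      refine ⟨⊥, ⊤, fun e ↦ hv ?_⟩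
      have hv' : v ∈ (⊥ : Subrepresentation ρ) := e ▸ Submodule.mem_top (R := ℂ)
      exact (Submodule.mem_bot ℂ).1 hv'
    exact ⟨fun S ↦ (h S.toSubmodule S.apply_mem_toSubmodule).imp
      (fun e ↦ Subrepresentation.toSubmodule_injective e)
      fun e ↦ Subrepresentation.toSubmodule_injective e⟩
  · intro h
    refine ⟨?_, fun S hS ↦ (eq_bot_or_eq_top (⟨S, hS⟩ : Subrepresentation ρ)).imp
      (congrArg Subrepresentation.toSubmodule) (congrArg Subrepresentation.toSubmodule)⟩
    by_contra! h0
    refine bot_ne_top (α := Subrepresentation ρ) (Subrepresentation.ext (Submodule.ext fun v ↦ ?_))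
    rw [h0 v]
    exact iff_of_true (zero_mem _) (zero_mem _)

lemma repIso_iff_nonempty_equiv : RepIso ρ ρ' ↔ Nonempty (ρ.Equiv ρ') :=
  ⟨fun ⟨e, he⟩ ↦ ⟨.mk e fun g ↦ LinearMap.ext (he g)⟩, fun ⟨e⟩ ↦ ⟨e.toLinearEquiv, fun g v ↦
    LinearMap.congr_fun (e.toIntertwiningMap.isIntertwining' g) v⟩⟩

lemma RepIso.trans {V'' : Type*} [AddCommGroup V''] [Module ℂ V''] {ρ'' : Representation ℂ G V''}
    (h : RepIso ρ ρ') (h' : RepIso ρ' ρ'') : RepIso ρ ρ'' := by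
  obtain ⟨e, he⟩ := h
  obtain ⟨e', he'⟩ := h'
  exact ⟨e.trans e', fun g v ↦ by simp only [LinearEquiv.trans_apply, he, he']⟩

lemma IsIrreducibleRep.of_repIso (h : IsIrreducibleRep ρ) (hρ' : RepIso ρ ρ') :
    IsIrreducibleRep ρ' := by
  obtain ⟨⟨v, hv⟩, hρ⟩ := h
  obtain ⟨e, he⟩ := hρ'
  refine ⟨⟨e v, e.map_ne_zero_iff.2 hv⟩, fun S hS ↦ ?_⟩
  have hS' := hρ (S.comap (e : V →ₗ[ℂ] V')) fun g v hv ↦ by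
    simpa only [Submodule.mem_comap, LinearEquiv.coe_coe, he] using hS g (e v) hv
  rw [← Submodule.map_comap_eq_of_surjective (f := (e : V →ₗ[ℂ] V')) e.surjective S]
  refine hS'.imp (fun hbot ↦ ?_) fun htop ↦ ?_
  · rw [hbot, Submodule.map_bot]
  · rw [htop, Submodule.map_top, LinearEquiv.range]

lemma RepIso.finrank_eq (e : RepIso ρ ρ') : Module.finrank ℂ V = Module.finrank ℂ V' :=
  e.choose.finrank_eq

lemma map_asAlgebraHom {e : V ≃ₗ[ℂ] V'} (he : ∀ g v, e (ρ g v) = ρ' g (e v)) (a : ℂ[G])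
    (v : V) : e (ρ.asAlgebraHom a v) = ρ'.asAlgebraHom a (e v) := by
  induction a using MonoidAlgebra.induction_on with
  | of g => simp only [Representation.asAlgebraHom_of, he]
  | add a b ha hb => simp only [map_add, LinearMap.add_apply, ha, hb]
  | smul c a ha => simp only [map_smul, LinearMap.smul_apply, ha]

lemma asAlgebraHom_apply_mem {S : Submodule ℂ V} (hS : ∀ g, ∀ v ∈ S, ρ g v ∈ S) (a : ℂ[G])
    {v : V} (hv : v ∈ S) : ρ.asAlgebraHom a v ∈ S := by
  induction a using MonoidAlgebra.induction_on with
  | of g => simpa only [Representation.asAlgebraHom_of] using hS g v hv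
  | add a b ha hb => simpa only [map_add, LinearMap.add_apply] using S.add_mem ha hb
  | smul c a ha => simpa only [map_smul, LinearMap.smul_apply] using S.smul_mem c ha

lemma IsIrreducibleRep.finrank_pos [FiniteDimensional ℂ V] (h : IsIrreducibleRep ρ) :
    0 < Module.finrank ℂ V :=
  have : Nontrivial V := nontrivial_of_ne h.1.choose 0 h.1.choose_spec
  Module.finrank_pos

section OfModule

variable {X : Type*} [AddCommGroup X] [Module ℂ X] [Module ℂ[G] X] [IsScalarTower ℂ ℂ[G] X]

lemma asAlgebraHom_ofModule' (a : ℂ[G]) (x : X) :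
    (Representation.ofModule' X : Representation ℂ G X).asAlgebraHom a x = a • x :=
  LinearMap.congr_fun (AlgHom.congr_fun
    ((MonoidAlgebra.lift ℂ (X →ₗ[ℂ] X) G).apply_symm_apply (Algebra.lsmul ℂ ℂ X)) a) x

variable (X) in
lemma isIrreducibleRep_ofModule' [IsSimpleModule ℂ[G] X] :
    IsIrreducibleRep (Representation.ofModule' X : Representation ℂ G X) := by
  have := IsSimpleModule.nontrivial ℂ[G] X
  refine ⟨exists_ne 0, fun S hS ↦ ?_⟩
  let S' : Submodule ℂ[G] X :=
    { S with smul_mem' := fun a x hx ↦ asAlgebraHom_ofModule' a x ▸ asAlgebraHom_apply_mem hS a hx }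
  exact (eq_bot_or_eq_top S').imp
    (fun h : S' = ⊥ ↦ Submodule.ext fun x ↦ SetLike.ext_iff.1 h x)
    (fun h : S' = ⊤ ↦ Submodule.ext fun x ↦ SetLike.ext_iff.1 h x)

end OfModule

end Bridge

section CentralCharacter

variable {G : Type*} [Group G]

lemma mem_center_of_coeff_conj {a : ℂ[G]} (ha : ∀ g h, a.coeff (h * g * h⁻¹) = a.coeff g) :
    a ∈ Submonoid.center ℂ[G] := by
  have hcomm (h : G) : MonoidAlgebra.of ℂ G h * a = a * MonoidAlgebra.of ℂ G h := by
    ext g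
    have := ha (h⁻¹ * g) h
    simp only [mul_inv_cancel_left] at this
    simp [this]
  rw [Submonoid.mem_center_iff]
  intro b
  induction b using MonoidAlgebra.induction_on with
  | of h => exact hcomm h
  | add b c hb hc => rw [add_mul, mul_add, hb, hc]
  | smul r b hb => rw [smul_mul_assoc, mul_smul_comm, hb]

variable {V : Type*} [AddCommGroup V] [Module ℂ V] (ρ : Representation ℂ G V)

/-- The central character of `ρ`: the scalar by which a central element `z` of `ℂ[G]` acts when `ρ`
is irreducible. It is encoded as a normalized trace, so it is a total function of `z`. -/
def centralCharacter (z : ℂ[G]) : ℂ :=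
  LinearMap.trace ℂ V (ρ.asAlgebraHom z) / Module.finrank ℂ V

variable {ρ}

lemma asAlgebraHom_eq_sum [Fintype G] (a : ℂ[G]) : ρ.asAlgebraHom a = ∑ g, a.coeff g • ρ g := by
  rw [Representation.asAlgebraHom_def, MonoidAlgebra.lift_apply]
  exact Finsupp.sum_fintype _ _ fun g ↦ zero_smul ℂ (ρ g)

lemma trace_asAlgebraHom [Fintype G] (a : ℂ[G]) :
    LinearMap.trace ℂ V (ρ.asAlgebraHom a) = ∑ g, a.coeff g * repChar ρ g := by
  simp only [asAlgebraHom_eq_sum, map_sum, map_smul, smul_eq_mul, repChar]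

variable [FiniteDimensional ℂ V]

lemma IsIrreducibleRep.asAlgebraHom_eq_smul_one (h : IsIrreducibleRep ρ) {z : ℂ[G]}
    (hz : z ∈ Submonoid.center ℂ[G]) : ρ.asAlgebraHom z = centralCharacter ρ z • 1 := by
  have := isIrreducibleRep_iff_isIrreducible.1 h
  obtain ⟨c, hc⟩ :=
    Representation.IsIrreducible.algebraMap_intertwiningMap_bijective_of_isAlgClosed.2
      (Representation.IntertwiningMap.centralAlgebraMul ρ hz)
  have hz_eq : ρ.asAlgebraHom z = c • 1 := LinearMap.ext fun v ↦ (congrArg (· v) hc).symm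
  have hd : (Module.finrank ℂ V : ℂ) ≠ 0 := Nat.cast_ne_zero.2 h.finrank_pos.ne'
  rw [centralCharacter, hz_eq, map_smul, LinearMap.trace_one, smul_eq_mul,
    mul_div_cancel_right₀ _ hd]

end CentralCharacter

section Isotypic

variable {G V : Type*} [Group G] [Fintype G] [AddCommGroup V] [Module ℂ V]
  (ρ : Representation ℂ G V)

/-- The idempotent `e_ρ = (d / |G|) ∑ g, χ(g⁻¹) g` of `ℂ[G]` attached to an irreducible `ρ`, which
acts on every representation as the projection onto its `ρ`-isotypic component. Writing `χ(g⁻¹)`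
rather than the conjugate of `χ(g)` avoids having to assume that `ρ` is unitary. -/
def isotypicIdempotent : ℂ[G] :=
  (Module.finrank ℂ V / Fintype.card G : ℂ) • ∑ g, MonoidAlgebra.single g (repChar ρ g⁻¹)

lemma coeff_isotypicIdempotent (g : G) : (isotypicIdempotent ρ).coeff g =
    Module.finrank ℂ V / Fintype.card G * repChar ρ g⁻¹ := by
  classical
  simp [isotypicIdempotent, Finsupp.single_apply]

lemma isotypicIdempotent_mem_center : isotypicIdempotent ρ ∈ Submonoid.center ℂ[G] :=
  mem_center_of_coeff_conj fun g h ↦ by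
    rw [coeff_isotypicIdempotent, coeff_isotypicIdempotent, conj_inv]
    exact congrArg _ (Representation.char_conj ρ g⁻¹ h)

variable {ρ} [FiniteDimensional ℂ V] {V' : Type*} [AddCommGroup V'] [Module ℂ V']
  [FiniteDimensional ℂ V'] {ρ' : Representation ℂ G V'}

open scoped Classical in
lemma IsIrreducibleRep.sum_repChar_mul_repChar_inv (h : IsIrreducibleRep ρ)
    (h' : IsIrreducibleRep ρ') : ∑ g, repChar ρ g * repChar ρ' g⁻¹ =
      if RepIso ρ' ρ then (Fintype.card G : ℂ) else 0 := by
  have := isIrreducibleRep_iff_isIrreducible.1 h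
  have := isIrreducibleRep_iff_isIrreducible.1 h'
  have hG : (Nat.card G : ℂ) ≠ 0 := Nat.cast_ne_zero.2 Nat.card_pos.ne'
  let : Invertible (Nat.card G : ℂ) := invertibleOfNonzero hG
  have orth := Representation.char_orthonormal ρ ρ'
  rw [inv_mul_eq_iff_eq_mul₀ hG, mul_ite, mul_one, mul_zero, Nat.card_eq_fintype_card] at orth
  simpa only [repIso_iff_nonempty_equiv] using! orth

open scoped Classical in
lemma IsIrreducibleRep.asAlgebraHom_isotypicIdempotent (h : IsIrreducibleRep ρ)
    (h' : IsIrreducibleRep ρ') :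
    ρ'.asAlgebraHom (isotypicIdempotent ρ) = if RepIso ρ ρ' then 1 else 0 := by
  have htrace : LinearMap.trace ℂ V' (ρ'.asAlgebraHom (isotypicIdempotent ρ)) =
      Module.finrank ℂ V / Fintype.card G *
        if RepIso ρ ρ' then (Fintype.card G : ℂ) else 0 := by
    rw [trace_asAlgebraHom, ← h'.sum_repChar_mul_repChar_inv h, Finset.mul_sum]
    exact Finset.sum_congr rfl fun g _ ↦ by
      rw [coeff_isotypicIdempotent, mul_assoc, mul_comm (repChar ρ _)]
  have hd : (Module.finrank ℂ V' : ℂ) ≠ 0 := Nat.cast_ne_zero.2 h'.finrank_pos.ne'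
  rw [h'.asAlgebraHom_eq_smul_one (isotypicIdempotent_mem_center ρ), centralCharacter, htrace]
  split_ifs with e
  · rw [e.finrank_eq, div_mul_cancel₀ _ (by simp), div_self hd, one_smul]
  · rw [mul_zero, zero_div, zero_smul]

end Isotypic

namespace IsCompleteFamily

variable {G : Type*} [Group G] {J : Type*} {W : J → Type*}
  [∀ j, NormedAddCommGroup (W j)] [∀ j, InnerProductSpace ℂ (W j)]
  [∀ j, FiniteDimensional ℂ (W j)] {σ : ∀ j, Representation ℂ G (W j)}

lemma repIso_iff_eq (hσ : IsCompleteFamily W σ) {i j : J} : RepIso (σ i) (σ j) ↔ i = j :=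
  ⟨fun h ↦ by_contra fun hij ↦ hσ.2.2.1 i j hij h, by rintro rfl; exact ⟨.refl ℂ _, fun _ _ ↦ rfl⟩⟩

-- `IsCompleteFamily` only speaks of spaces in `Type`, so `τ` is first transported to `ℂⁿ`.
lemma exists_repIso (hσ : IsCompleteFamily W σ) {U : Type*} [AddCommGroup U] [Module ℂ U]
    [FiniteDimensional ℂ U] {τ : Representation ℂ G U} (hτ : IsIrreducibleRep τ) :
    ∃ j, RepIso τ (σ j) := by
  let e := (Module.finBasis ℂ U).equivFun
  let τ' : Representation ℂ G (Fin (Module.finrank ℂ U) → ℂ) := (e.conjAlgEquiv ℂ : _ →* _).comp τ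
  have hττ' : RepIso τ τ' := ⟨e, fun g v ↦ by simp [τ']⟩
  obtain ⟨j, hj⟩ := hσ.2.2.2 _ τ' (hτ.of_repIso hττ')
  exact ⟨j, hττ'.trans hj⟩

lemma eq_of_asAlgebraHom_eq [Finite G] (hσ : IsCompleteFamily W σ) {a b : ℂ[G]}
    (h : ∀ j, (σ j).asAlgebraHom a = (σ j).asAlgebraHom b) : a = b := by
  suffices a - b ∈ Ring.jacobson ℂ[G] by
    rwa [IsSemisimpleRing.jacobson_eq_bot, Submodule.mem_bot, sub_eq_zero] at this
  rw [Ring.jacobson_eq_sInf_isMaximal, Submodule.mem_sInf]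
  intro I hI
  have : IsSimpleModule ℂ[G] (ℂ[G] ⧸ I) := isSimpleModule_iff_isCoatom.2 hI.1
  have : FiniteDimensional ℂ (ℂ[G] ⧸ I) := .of_surjective (I.mkQ.restrictScalars ℂ) I.mkQ_surjective
  obtain ⟨j, e, he⟩ := hσ.exists_repIso (isIrreducibleRep_ofModule' (G := G) (ℂ[G] ⧸ I))
  have hquot : (a - b) • (Submodule.Quotient.mk 1 : ℂ[G] ⧸ I) = 0 := e.injective <| by
    rw [← asAlgebraHom_ofModule', map_asAlgebraHom he, map_sub, h j, sub_self,
      LinearMap.zero_apply, map_zero]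
  rwa [← Submodule.Quotient.mk_smul, Submodule.Quotient.mk_eq_zero, smul_eq_mul, mul_one] at hquot

variable [Fintype G]

open scoped Classical in
lemma asAlgebraHom_isotypicIdempotent (hσ : IsCompleteFamily W σ) (i j : J) :
    (σ j).asAlgebraHom (isotypicIdempotent (σ i)) = if i = j then 1 else 0 := by
  simp_rw [(hσ.2.1 i).asAlgebraHom_isotypicIdempotent (hσ.2.1 j), hσ.repIso_iff_eq]

lemma isIdempotentElem_isotypicIdempotent (hσ : IsCompleteFamily W σ) (j : J) :
    IsIdempotentElem (isotypicIdempotent (σ j)) :=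
  hσ.eq_of_asAlgebraHom_eq fun i ↦ by
    rw [map_mul, hσ.asAlgebraHom_isotypicIdempotent]
    split_ifs <;> simp

variable [Fintype J]

lemma sum_centralCharacter_smul_isotypicIdempotent (hσ : IsCompleteFamily W σ) {z : ℂ[G]}
    (hz : z ∈ Submonoid.center ℂ[G]) :
    ∑ j, centralCharacter (σ j) z • isotypicIdempotent (σ j) = z :=
  hσ.eq_of_asAlgebraHom_eq fun i ↦ by
    classical
    simp [hσ.asAlgebraHom_isotypicIdempotent, (hσ.2.1 i).asAlgebraHom_eq_smul_one hz]

lemma sum_isotypicIdempotent (hσ : IsCompleteFamily W σ) :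
    ∑ j, isotypicIdempotent (σ j) = 1 :=
  hσ.eq_of_asAlgebraHom_eq fun i ↦ by
    classical
    simp [hσ.asAlgebraHom_isotypicIdempotent]

lemma sum_finrank_mul_repChar [DecidableEq G] (hσ : IsCompleteFamily W σ) (g : G) :
    ∑ j, Module.finrank ℂ (W j) * repChar (σ j) g = if g = 1 then (Fintype.card G : ℂ) else 0 := by
  have hcoeff := congrArg (MonoidAlgebra.coeff · g⁻¹) hσ.sum_isotypicIdempotent
  simp only [MonoidAlgebra.coeff_sum, Finsupp.finsetSum_apply, coeff_isotypicIdempotent, inv_inv,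
    MonoidAlgebra.one_def, MonoidAlgebra.coeff_single, Finsupp.single_apply, div_mul_eq_mul_div,
    ← Finset.sum_div] at hcoeff
  rw [div_eq_iff (by simp)] at hcoeff
  simpa [eq_comm] using hcoeff

end IsCompleteFamily

section Unitary

lemma inner_apply_self_of_isSymmetricProjection {V : Type*} [NormedAddCommGroup V]
    [InnerProductSpace ℂ V] {T : V →ₗ[ℂ] V} (hT : T.IsSymmetricProjection) (v : V) :
    ⟪v, T v⟫_ℂ = (‖T v‖ ^ 2 : ℝ) := by
  rw [← hT.isIdempotentElem.eq, Module.End.mul_apply, ← hT.isSymmetric, inner_self_eq_norm_sq_to_K,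
    ← Module.End.mul_apply, hT.isIdempotentElem.eq]
  push_cast
  rfl

namespace IsUnitaryRep

variable {G V : Type*} [Group G] [NormedAddCommGroup V] [InnerProductSpace ℂ V]
  {ρ : Representation ℂ G V}

lemma comp {K : Type*} [Group K] (h : IsUnitaryRep ρ) (φ : K →* G) : IsUnitaryRep (ρ.comp φ) :=
  fun g ↦ h (φ g)

lemma inner_apply_left (h : IsUnitaryRep ρ) (g : G) (v w : V) :
    ⟪ρ g v, w⟫_ℂ = ⟪v, ρ g⁻¹ w⟫_ℂ := by
  rw [← h g v, Representation.self_inv_apply]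

lemma norm_apply (h : IsUnitaryRep ρ) (g : G) (v : V) : ‖ρ g v‖ = ‖v‖ := by
  rw [@norm_eq_sqrt_re_inner ℂ, h, ← @norm_eq_sqrt_re_inner ℂ]

lemma isSymmetric_asAlgebraHom [Finite G] (h : IsUnitaryRep ρ) {a : ℂ[G]}
    (ha : ∀ g, starRingEnd ℂ (a.coeff g) = a.coeff g⁻¹) : (ρ.asAlgebraHom a).IsSymmetric := by
  have := Fintype.ofFinite G
  intro v w
  simp only [asAlgebraHom_eq_sum, LinearMap.sum_apply, LinearMap.smul_apply, sum_inner, inner_sum,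
    inner_smul_left, inner_smul_right, h.inner_apply_left, ha]
  exact Equiv.sum_comp (Equiv.inv G) fun g ↦ a.coeff g * ⟪v, ρ g w⟫_ℂ

variable [FiniteDimensional ℂ V]

lemma conj_repChar (h : IsUnitaryRep ρ) (g : G) :
    starRingEnd ℂ (repChar ρ g) = repChar ρ g⁻¹ := by
  simp only [repChar, LinearMap.trace_eq_sum_inner _ (stdOrthonormalBasis ℂ V), map_sum,
    inner_conj_symm, h.inner_apply_left]

lemma norm_repChar_le (h : IsUnitaryRep ρ) (g : G) : ‖repChar ρ g‖ ≤ Module.finrank ℂ V := by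
  let b := stdOrthonormalBasis ℂ V
  calc ‖repChar ρ g‖ = ‖∑ i, ⟪b i, ρ g (b i)⟫_ℂ‖ := by
        rw [repChar, LinearMap.trace_eq_sum_inner _ b]
    _ ≤ ∑ i, ‖b i‖ * ‖ρ g (b i)‖ := norm_sum_le_of_le _ fun i _ ↦ norm_inner_le_norm _ _
    _ = Module.finrank ℂ V := by simp [h.norm_apply]

lemma conj_coeff_isotypicIdempotent [Fintype G] (h : IsUnitaryRep ρ) (g : G) :
    starRingEnd ℂ ((isotypicIdempotent ρ).coeff g) = (isotypicIdempotent ρ).coeff g⁻¹ := by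
  simp [coeff_isotypicIdempotent, h.conj_repChar]

end IsUnitaryRep

end Unitary

namespace IsCompleteFamily

variable {G : Type*} [Group G] [Fintype G] {J : Type*} {W : J → Type*}
  [∀ j, NormedAddCommGroup (W j)] [∀ j, InnerProductSpace ℂ (W j)]
  [∀ j, FiniteDimensional ℂ (W j)] {σ : ∀ j, Representation ℂ G (W j)}
  {V : Type*} [NormedAddCommGroup V] [InnerProductSpace ℂ V] {τ : Representation ℂ G V}

lemma isSymmetricProjection_isotypicIdempotent (hσ : IsCompleteFamily W σ) (hτ : IsUnitaryRep τ)
    (j : J) : (τ.asAlgebraHom (isotypicIdempotent (σ j))).IsSymmetricProjection where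
  isIdempotentElem := (hσ.isIdempotentElem_isotypicIdempotent j).map τ.asAlgebraHom
  isSymmetric := hτ.isSymmetric_asAlgebraHom (hσ.1 j).conj_coeff_isotypicIdempotent

lemma inner_asAlgebraHom_of_mem_center [Fintype J] (hσ : IsCompleteFamily W σ) (hτ : IsUnitaryRep τ)
    {z : ℂ[G]} (hz : z ∈ Submonoid.center ℂ[G]) (v : V) :
    ⟪v, τ.asAlgebraHom z v⟫_ℂ = ∑ j, centralCharacter (σ j) z *
      (‖τ.asAlgebraHom (isotypicIdempotent (σ j)) v‖ ^ 2 : ℝ) := by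
  conv_lhs => rw [← hσ.sum_centralCharacter_smul_isotypicIdempotent hz]
  simp only [map_sum, map_smul, LinearMap.sum_apply, LinearMap.smul_apply, inner_sum,
    inner_smul_right, inner_apply_self_of_isSymmetricProjection
      (hσ.isSymmetricProjection_isotypicIdempotent hτ _)]

lemma sum_norm_isotypicIdempotent_sq [Fintype J] (hσ : IsCompleteFamily W σ)
    (hτ : IsUnitaryRep τ) (v : V) :
    ∑ j, ‖τ.asAlgebraHom (isotypicIdempotent (σ j)) v‖ ^ 2 = ‖v‖ ^ 2 := by
  have hinner : ⟪v, τ.asAlgebraHom (∑ j, isotypicIdempotent (σ j)) v⟫_ℂ =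
      (∑ j, ‖τ.asAlgebraHom (isotypicIdempotent (σ j)) v‖ ^ 2 : ℝ) := by
    simp only [map_sum, LinearMap.sum_apply, inner_sum, inner_apply_self_of_isSymmetricProjection
      (hσ.isSymmetricProjection_isotypicIdempotent hτ _), Complex.ofReal_sum]
  rw [hσ.sum_isotypicIdempotent, map_one, Module.End.one_apply,
    inner_self_eq_norm_sq_to_K] at hinner
  exact Complex.ofReal_injective (by rw [← hinner]; push_cast; rfl)

lemma norm_inner_asAlgebraHom_le [Finite J] (hσ : IsCompleteFamily W σ) (hτ : IsUnitaryRep τ)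
    {z : ℂ[G]} (hz : z ∈ Submonoid.center ℂ[G]) {Λ : Finset J} {lam : ℝ} (hlam : 0 ≤ lam)
    (hΛ : ∀ j ∈ Λ, ‖centralCharacter (σ j) z‖ ≤ 1)
    (hΛc : ∀ j ∉ Λ, ‖centralCharacter (σ j) z‖ ≤ lam) (v : V) :
    ‖⟪v, τ.asAlgebraHom z v⟫_ℂ‖ ≤
      lam * ‖v‖ ^ 2 + ∑ j ∈ Λ, ‖τ.asAlgebraHom (isotypicIdempotent (σ j)) v‖ ^ 2 := by
  classical
  have := Fintype.ofFinite J
  have hω (j : J) : ‖centralCharacter (σ j) z‖ ≤ lam + if j ∈ Λ then 1 else 0 := by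
    split_ifs with hj
    · exact (hΛ j hj).trans (le_add_of_nonneg_left hlam)
    · exact (hΛc j hj).trans_eq (add_zero _).symm
  calc ‖⟪v, τ.asAlgebraHom z v⟫_ℂ‖
      ≤ ∑ j, ‖centralCharacter (σ j) z‖ * ‖τ.asAlgebraHom (isotypicIdempotent (σ j)) v‖ ^ 2 := by
        rw [hσ.inner_asAlgebraHom_of_mem_center hτ hz]
        refine norm_sum_le_of_le _ fun j _ ↦ ?_
        rw [norm_mul, Complex.norm_real, Real.norm_of_nonneg (sq_nonneg _)]
    _ ≤ ∑ j, (lam + if j ∈ Λ then 1 else 0) *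
          ‖τ.asAlgebraHom (isotypicIdempotent (σ j)) v‖ ^ 2 := by gcongr; exact hω _
    _ = _ := by
        simp only [add_mul, ite_mul, one_mul, zero_mul, Finset.sum_add_distrib, Finset.sum_ite_mem,
          Finset.univ_inter, ← Finset.mul_sum, hσ.sum_norm_isotypicIdempotent_sq hτ]

end IsCompleteFamily

section ClassAverage

variable {G : Type*} [Group G]

/-- The average of the elements of `M` in `ℂ[G]`; it is central when `M` is a conjugacy class. -/
def classAverage (M : Finset G) : ℂ[G] :=
  (M.card : ℂ)⁻¹ • ∑ m ∈ M, MonoidAlgebra.single m 1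

lemma coeff_classAverage [DecidableEq G] (M : Finset G) (g : G) :
    (classAverage M).coeff g = if g ∈ M then (M.card : ℂ)⁻¹ else 0 := by
  simp [classAverage, Finsupp.single_apply]

lemma asAlgebraHom_classAverage {V : Type*} [AddCommGroup V] [Module ℂ V]
    (ρ : Representation ℂ G V) (M : Finset G) :
    ρ.asAlgebraHom (classAverage M) = (M.card : ℂ)⁻¹ • ∑ m ∈ M, ρ m := by
  simp [classAverage, Representation.asAlgebraHom_single]

variable {M : Finset G} {m₀ : G}

lemma classAverage_mem_center (hM : ∀ m, m ∈ M ↔ IsConj m₀ m) :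
    classAverage M ∈ Submonoid.center ℂ[G] := by
  classical
  refine mem_center_of_coeff_conj fun g h ↦ ?_
  have hconj : IsConj g (h * g * h⁻¹) := isConj_iff.2 ⟨h, rfl⟩
  have hmem : h * g * h⁻¹ ∈ M ↔ g ∈ M := by
    rw [hM, hM]
    exact ⟨fun h' ↦ h'.trans hconj.symm, fun h' ↦ h'.trans hconj⟩
  simp only [coeff_classAverage, hmem]

lemma centralCharacter_classAverage (hM : ∀ m, m ∈ M ↔ IsConj m₀ m) {V : Type*}
    [AddCommGroup V] [Module ℂ V] (ρ : Representation ℂ G V) :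
    centralCharacter ρ (classAverage M) = repChar ρ m₀ / Module.finrank ℂ V := by
  have hm₀ : m₀ ∈ M := (hM m₀).2 (IsConj.refl m₀)
  have hχ : ∀ m ∈ M, LinearMap.trace ℂ V (ρ m) = repChar ρ m₀ := by
    intro m hm
    obtain ⟨x, rfl⟩ := isConj_iff.1 ((hM m).1 hm)
    exact Representation.char_conj ρ m₀ x
  rw [centralCharacter, asAlgebraHom_classAverage, map_smul, map_sum, Finset.sum_congr rfl hχ,
    Finset.sum_const, nsmul_eq_mul, smul_eq_mul, inv_mul_cancel_left₀]
  exact Nat.cast_ne_zero.2 (Finset.card_ne_zero_of_mem hm₀)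

end ClassAverage

section Embedding

variable {G : Type*} [Group G] {k : ℕ}

/-- `onI` bundled as the homomorphism `g ↦ g^I`, along which representations of `G^k` are
restricted to `G`. -/
def onIHom (I : Finset (Fin k)) : G →* (Fin k → G) where
  toFun g := onI g I
  map_one' := by ext i; simp [onI]
  map_mul' a b := by ext i; by_cases h : i ∈ I <;> simp [onI, h]

@[simp]
lemma onIHom_apply (I : Finset (Fin k)) (g : G) : onIHom I g = onI g I := rfl

@[simp]
lemma onI_empty (g : G) : onI g (∅ : Finset (Fin k)) = 1 := by
  ext i
  simp [onI]

lemma onIHom_injective {I : Finset (Fin k)} (hI : I.Nonempty) :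
    Function.Injective (onIHom I : G →* (Fin k → G)) := by
  obtain ⟨i, hi⟩ := hI
  intro a b hab
  simpa [onI, hi] using congrFun hab i

lemma onI_mul_onI {m : G} (hm : m * m = 1) (I K : Finset (Fin k)) :
    onI m I * onI m K = onI m (symmDiff I K) := by
  ext i
  by_cases hI : i ∈ I <;> by_cases hK : i ∈ K <;> simp [onI, hI, hK, Finset.mem_symmDiff, hm]

lemma onI_inv {m : G} (hm : m * m = 1) (I : Finset (Fin k)) : (onI m I)⁻¹ = onI m I := by
  rw [inv_eq_iff_mul_eq_one, onI_mul_onI hm, symmDiff_self, Finset.bot_eq_empty, onI_empty]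

end Embedding

section InvProj

variable {G : Type*} [Group G] {k : ℕ}

lemma isIdempotentElem_invProj {V : Type*} [AddCommGroup V] [Module ℂ V]
    (ρ : Representation ℂ (Fin k → G) V) {m : G} (hm : m * m = 1) :
    IsIdempotentElem (invProj ρ m) := by
  have habsorb (I : Finset (Fin k)) : ρ (onI m I) * invProj ρ m = invProj ρ m := by
    simp only [invProj, mul_smul_comm, Finset.mul_sum, ← map_mul, onI_mul_onI hm]
    congr 1
    exact Equiv.sum_comp (symmDiff_right_involutive I).toPerm fun K ↦ ρ (onI m K)
  calc invProj ρ m * invProj ρ m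
      = ((2 : ℂ) ^ k)⁻¹ • ∑ I : Finset (Fin k), ρ (onI m I) * invProj ρ m := by
        rw [← Finset.sum_mul, ← smul_mul_assoc, invProj]
    _ = invProj ρ m := by
        simp only [habsorb, Finset.sum_const, Finset.card_univ, Fintype.card_finset,
          Fintype.card_fin]
        rw [← Nat.cast_smul_eq_nsmul ℂ, smul_smul]
        simp

variable {V : Type*} [NormedAddCommGroup V] [InnerProductSpace ℂ V]
  {ρ : Representation ℂ (Fin k → G) V}

lemma IsUnitaryRep.isSymmetricProjection_invProj (hρ : IsUnitaryRep ρ) {m : G} (hm : m * m = 1) :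
    (invProj ρ m).IsSymmetricProjection where
  isIdempotentElem := isIdempotentElem_invProj ρ hm
  isSymmetric := by
    refine LinearMap.IsSymmetric.smul
      (by rw [map_inv₀, map_pow, Complex.conj_ofNat]) (LinearMap.isSymmetric_sum _ fun I _ v w ↦ ?_)
    rw [hρ.inner_apply_left, onI_inv hm]

lemma IsUnitaryRep.norm_invProj_sq (hρ : IsUnitaryRep ρ) {m : G} (hm : m * m = 1) (v : V) :
    ((‖invProj ρ m v‖ ^ 2 : ℝ) : ℂ) =
      ((2 : ℂ) ^ k)⁻¹ * ∑ I : Finset (Fin k), ⟪v, ρ (onI m I) v⟫_ℂ := by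
  rw [← inner_apply_self_of_isSymmetricProjection (hρ.isSymmetricProjection_invProj hm)]
  simp only [invProj, LinearMap.smul_apply, LinearMap.sum_apply, inner_smul_right, inner_sum]

lemma IsUnitaryRep.average_norm_invProj_sq (hρ : IsUnitaryRep ρ) {M : Finset G}
    (hM : ∀ m ∈ M, m * m = 1) (v : V) :
    ((1 / M.card * ∑ m ∈ M, ‖invProj ρ m v‖ ^ 2 : ℝ) : ℂ) = ((2 : ℂ) ^ k)⁻¹ *
      ∑ I, ⟪v, Representation.asAlgebraHom (ρ.comp (onIHom I)) (classAverage M) v⟫_ℂ := by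
  have hnorm : ∑ m ∈ M, ((‖invProj ρ m v‖ ^ 2 : ℝ) : ℂ) =
      ∑ m ∈ M, ((2 : ℂ) ^ k)⁻¹ * ∑ I : Finset (Fin k), ⟪v, ρ (onI m I) v⟫_ℂ :=
    Finset.sum_congr rfl fun m hm ↦ hρ.norm_invProj_sq (hM m hm) v
  simp only [Complex.ofReal_mul, Complex.ofReal_sum, hnorm, ← Finset.mul_sum,
    asAlgebraHom_classAverage, LinearMap.smul_apply, LinearMap.sum_apply, inner_smul_right,
    inner_sum]
  rw [Finset.sum_comm, mul_left_comm]
  simp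

lemma IsUnitaryRep.abs_average_norm_invProj_sq_sub_le (hρ : IsUnitaryRep ρ) {M : Finset G}
    (hM : ∀ m ∈ M, m * m = 1) (hM₀ : M.Nonempty) {v : V} (hv : ‖v‖ = 1) :
    |1 / (M.card : ℝ) * ∑ m ∈ M, ‖invProj ρ m v‖ ^ 2 - ((2 : ℝ) ^ k)⁻¹| ≤
      ((2 : ℝ) ^ k)⁻¹ * ∑ I ∈ Finset.univ.erase (∅ : Finset (Fin k)),
        ‖⟪v, Representation.asAlgebraHom (ρ.comp (onIHom I)) (classAverage M) v⟫_ℂ‖ := by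
  let A (I : Finset (Fin k)) : ℂ :=
    ⟪v, Representation.asAlgebraHom (ρ.comp (onIHom I)) (classAverage M) v⟫_ℂ
  have hempty : A ∅ = 1 := by
    have hcard : (M.card : ℂ) ≠ 0 := Nat.cast_ne_zero.2 hM₀.card_ne_zero
    simp [A, asAlgebraHom_classAverage, inner_self_eq_norm_sq_to_K, hv, hcard]
  have hsub : ((1 / M.card * ∑ m ∈ M, ‖invProj ρ m v‖ ^ 2 - ((2 : ℝ) ^ k)⁻¹ : ℝ) : ℂ) =
      ((2 : ℂ) ^ k)⁻¹ * ∑ I ∈ Finset.univ.erase ∅, A I := by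
    rw [Complex.ofReal_sub, hρ.average_norm_invProj_sq hM,
      ← Finset.add_sum_erase _ _ (Finset.mem_univ ∅), mul_add]
    change _ * A ∅ + _ - _ = _
    rw [hempty]
    push_cast
    ring
  rw [← Real.norm_eq_abs, ← Complex.norm_real, hsub, norm_mul, norm_inv, norm_pow,
    RCLike.norm_ofNat]
  gcongr
  exact norm_sum_le _ _

end InvProj

section PlancherelMean

variable {H : Type*} [Fintype H] {T : Type*} [Fintype T] {V : T → Type*}
  [∀ i, NormedAddCommGroup (V i)] [∀ i, InnerProductSpace ℂ (V i)]
  {ι : T → Type*} [∀ i, Fintype (ι i)]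

variable (H V ι) in
/-- The mean of a function of `(i, x)`, with `i` drawn from the Plancherel measure
`d_i² / |H|` and `x` uniform in an index set `ι i` of a basis of `V i`. -/
def plancherelMean : (∀ i, ι i → ℝ) →ₗ[ℝ] ℝ :=
  ∑ i, ((Module.finrank ℂ (V i) : ℝ) ^ 2 / Fintype.card H) • (1 / (Module.finrank ℂ (V i) : ℝ)) •
    ∑ x : ι i, LinearMap.proj x ∘ₗ LinearMap.proj i

lemma plancherelMean_apply (F : ∀ i, ι i → ℝ) : plancherelMean H V ι F =
    ∑ i, (Module.finrank ℂ (V i) : ℝ) ^ 2 / Fintype.card H *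
      (1 / (Module.finrank ℂ (V i) : ℝ) * ∑ x, F i x) := by
  simp [plancherelMean]

lemma plancherelMean_mono {F F' : ∀ i, ι i → ℝ} (h : F ≤ F') :
    plancherelMean H V ι F ≤ plancherelMean H V ι F' := by
  simp only [plancherelMean_apply]
  gcongr
  exact h _ _

namespace IsCompleteFamily

variable [Group H] [∀ i, FiniteDimensional ℂ (V i)] {ρ : ∀ i, Representation ℂ H (V i)}
  {K : Type*} [Group K] {φ : K →* H}

lemma sum_finrank_mul_trace_asAlgebraHom_comp (hρ : IsCompleteFamily V ρ)
    (hφ : Function.Injective φ) (a : ℂ[K]) :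
    ∑ i, Module.finrank ℂ (V i) *
      LinearMap.trace ℂ (V i) (Representation.asAlgebraHom ((ρ i).comp φ) a) =
        Fintype.card H * a.coeff 1 := by
  classical
  have := Fintype.ofInjective φ hφ
  calc _ = ∑ g, a.coeff g * ∑ i, Module.finrank ℂ (V i) * repChar (ρ i) (φ g) := by
        simp only [trace_asAlgebraHom, Finset.mul_sum, mul_left_comm (a.coeff _)]
        exact Finset.sum_comm
    _ = _ := by
        simp [hρ.sum_finrank_mul_repChar, map_eq_one_iff φ hφ, mul_comm]

lemma plancherelMean_re_inner (hρ : IsCompleteFamily V ρ) (B : ∀ i, OrthonormalBasis (ι i) ℂ (V i))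
    (hφ : Function.Injective φ) (a : ℂ[K]) :
    plancherelMean H V ι (fun i x ↦
      (⟪B i x, Representation.asAlgebraHom ((ρ i).comp φ) a (B i x)⟫_ℂ).re) = (a.coeff 1).re := by
  have htrace (i : T) : ∑ x, (⟪B i x, Representation.asAlgebraHom ((ρ i).comp φ) a (B i x)⟫_ℂ).re =
      (LinearMap.trace ℂ (V i) (Representation.asAlgebraHom ((ρ i).comp φ) a)).re := by
    rw [LinearMap.trace_eq_sum_inner _ (B i), Complex.re_sum]
  have hd (i : T) : (Module.finrank ℂ (V i) : ℝ) ≠ 0 :=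
    Nat.cast_ne_zero.2 (hρ.2.1 i).finrank_pos.ne'
  have hsum := congrArg Complex.re (hρ.sum_finrank_mul_trace_asAlgebraHom_comp hφ a)
  simp only [Complex.re_sum, ← Complex.ofReal_natCast, Complex.re_ofReal_mul] at hsum
  calc _ = (∑ i, (Module.finrank ℂ (V i) : ℝ) *
        (LinearMap.trace ℂ (V i) (Representation.asAlgebraHom ((ρ i).comp φ) a)).re) /
          Fintype.card H := by
        rw [plancherelMean_apply, Finset.sum_div]
        refine Finset.sum_congr rfl fun i _ ↦ ?_
        rw [htrace]
        field_simp [hd i]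
    _ = _ := by rw [hsum, mul_div_cancel_left₀ _ (by simp)]

lemma plancherelMean_const (hρ : IsCompleteFamily V ρ) (B : ∀ i, OrthonormalBasis (ι i) ℂ (V i))
    (c : ℝ) : plancherelMean H V ι (fun _ _ ↦ c) = c := by
  have hone : plancherelMean H V ι (fun _ _ ↦ 1) = 1 := by
    simpa [MonoidAlgebra.one_def, inner_self_eq_norm_sq_to_K] using
      hρ.plancherelMean_re_inner B (φ := MonoidHom.id H) Function.injective_id 1
  calc plancherelMean H V ι (fun _ _ ↦ c) = plancherelMean H V ι (c • fun _ _ ↦ 1) := by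
        congr 1
        ext i x
        simp
    _ = c := by rw [map_smul, hone, smul_eq_mul, mul_one]

variable [Fintype K] {J : Type*} {W : J → Type*} [∀ j, NormedAddCommGroup (W j)]
  [∀ j, InnerProductSpace ℂ (W j)] [∀ j, FiniteDimensional ℂ (W j)]
  {σ : ∀ j, Representation ℂ K (W j)}

lemma plancherelMean_norm_isotypicIdempotent_sq (hρ : IsCompleteFamily V ρ)
    (B : ∀ i, OrthonormalBasis (ι i) ℂ (V i)) (hφ : Function.Injective φ)
    (hσ : IsCompleteFamily W σ) (j : J) :
    plancherelMean H V ι (fun i x ↦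
      ‖Representation.asAlgebraHom ((ρ i).comp φ) (isotypicIdempotent (σ j)) (B i x)‖ ^ 2) =
        (Module.finrank ℂ (W j) : ℝ) ^ 2 / Fintype.card K := by
  have hcoeff : (isotypicIdempotent (σ j)).coeff 1 =
      ((Module.finrank ℂ (W j) : ℝ) ^ 2 / Fintype.card K : ℝ) := by
    rw [coeff_isotypicIdempotent, inv_one, repChar, map_one, LinearMap.trace_one]
    push_cast
    ring
  have hmean := hρ.plancherelMean_re_inner B hφ (isotypicIdempotent (σ j))
  simpa only [hcoeff, Complex.ofReal_re, inner_apply_self_of_isSymmetricProjection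
    (hσ.isSymmetricProjection_isotypicIdempotent ((hρ.1 _).comp φ) j)] using hmean

lemma plancherelMean_const_add_sum_norm_isotypicIdempotent_sq (hρ : IsCompleteFamily V ρ)
    (B : ∀ i, OrthonormalBasis (ι i) ℂ (V i)) (hφ : Function.Injective φ)
    (hσ : IsCompleteFamily W σ) (c : ℝ) (Λ : Finset J) :
    plancherelMean H V ι (fun i x ↦ c + ∑ j ∈ Λ,
      ‖Representation.asAlgebraHom ((ρ i).comp φ) (isotypicIdempotent (σ j)) (B i x)‖ ^ 2) =
        c + ∑ j ∈ Λ, (Module.finrank ℂ (W j) : ℝ) ^ 2 / Fintype.card K := by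
  simp only [← hρ.plancherelMean_norm_isotypicIdempotent_sq B hφ hσ, ← map_sum]
  nth_rw 2 [← hρ.plancherelMean_const B c]
  rw [← map_add]
  congr 1
  ext i x
  simp only [Pi.add_apply, Finset.sum_apply]

end IsCompleteFamily

end PlancherelMean

section Deviation

variable {G : Type*} [Group G] [Fintype G] {J : Type*} [Finite J] {W : J → Type*}
  [∀ j, NormedAddCommGroup (W j)] [∀ j, InnerProductSpace ℂ (W j)]
  [∀ j, FiniteDimensional ℂ (W j)] {σ : ∀ j, Representation ℂ G (W j)} {M : Finset G} {m₀ : G}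
  {Λ : Finset J} {lam : ℝ}

lemma IsCompleteFamily.norm_inner_classAverage_le (hσ : IsCompleteFamily W σ)
    (hM : ∀ m, m ∈ M ↔ IsConj m₀ m) (hlam : 0 ≤ lam)
    (hΛ : ∀ j ∉ Λ, ‖repChar (σ j) m₀‖ ≤ lam * Module.finrank ℂ (W j))
    {V : Type*} [NormedAddCommGroup V] [InnerProductSpace ℂ V] {τ : Representation ℂ G V}
    (hτ : IsUnitaryRep τ) {v : V} (hv : ‖v‖ = 1) :
    ‖⟪v, τ.asAlgebraHom (classAverage M) v⟫_ℂ‖ ≤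
      lam + ∑ j ∈ Λ, ‖τ.asAlgebraHom (isotypicIdempotent (σ j)) v‖ ^ 2 := by
  have hd (j : J) : (0 : ℝ) < Module.finrank ℂ (W j) := Nat.cast_pos.2 (hσ.2.1 j).finrank_pos
  have hω (j : J) : ‖centralCharacter (σ j) (classAverage M)‖ =
      ‖repChar (σ j) m₀‖ / Module.finrank ℂ (W j) := by
    rw [centralCharacter_classAverage hM, norm_div, Complex.norm_natCast]
  have hbound := hσ.norm_inner_asAlgebraHom_le hτ (classAverage_mem_center hM) (Λ := Λ) hlam
    (fun j _ ↦ by rw [hω, div_le_one (hd j)]; exact (hσ.1 j).norm_repChar_le m₀)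
    (fun j hj ↦ by rw [hω, div_le_iff₀ (hd j)]; exact hΛ j hj) v
  rwa [hv, one_pow, mul_one] at hbound

lemma IsCompleteFamily.abs_average_norm_invProj_sq_sub_le (hσ : IsCompleteFamily W σ)
    (hM : ∀ m, m ∈ M ↔ IsConj m₀ m) (hinv : ∀ m ∈ M, m * m = 1) (hlam : 0 ≤ lam)
    (hΛ : ∀ j ∉ Λ, ‖repChar (σ j) m₀‖ ≤ lam * Module.finrank ℂ (W j)) {k : ℕ}
    {V : Type*} [NormedAddCommGroup V] [InnerProductSpace ℂ V]
    {ρ : Representation ℂ (Fin k → G) V} (hρ : IsUnitaryRep ρ) {v : V} (hv : ‖v‖ = 1) :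
    |1 / (M.card : ℝ) * ∑ m ∈ M, ‖invProj ρ m v‖ ^ 2 - ((2 : ℝ) ^ k)⁻¹| ≤
      ((2 : ℝ) ^ k)⁻¹ * ∑ I ∈ Finset.univ.erase (∅ : Finset (Fin k)), (lam + ∑ j ∈ Λ,
        ‖Representation.asAlgebraHom (ρ.comp (onIHom I)) (isotypicIdempotent (σ j)) v‖ ^ 2) := by
  refine (hρ.abs_average_norm_invProj_sq_sub_le hinv ⟨m₀, (hM m₀).2 (.refl m₀)⟩ hv).trans ?_
  gcongr
  exact hσ.norm_inner_classAverage_le hM hlam hΛ (hρ.comp _) hv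

end Deviation

/-- Expectation bound (Lemma 6 of the paper): the Plancherel- and basis-average
of `|E_m ‖Π_m^{(i)} b‖² − 2^{-k}|` is at most `λ + P(Λ)`. -/
theorem stmt12 {G : Type*} [Group G] [Fintype G]
    {J : Type*} [Fintype J]
    (W : J → Type*) [∀ j, NormedAddCommGroup (W j)] [∀ j, InnerProductSpace ℂ (W j)]
    [∀ j, FiniteDimensional ℂ (W j)]
    (σ : ∀ j, Representation ℂ G (W j)) (hfam : IsCompleteFamily W σ)
    (M : Finset G) (m₀ : G) (hm₀M : m₀ ∈ M)
    (hM : ∀ m : G, m ∈ M ↔ IsConj m₀ m)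
    (hinv : ∀ m ∈ M, m * m = 1 ∧ m ≠ 1)
    {k : ℕ} (hk : 1 ≤ k)
    {T : Type*} [Fintype T]
    (Vi : T → Type*) [∀ i, NormedAddCommGroup (Vi i)] [∀ i, InnerProductSpace ℂ (Vi i)]
    [∀ i, FiniteDimensional ℂ (Vi i)]
    (ρi : ∀ i, Representation ℂ (Fin k → G) (Vi i)) (hfam' : IsCompleteFamily Vi ρi)
    (ι : T → Type*) [∀ i, Fintype (ι i)] (B : ∀ i, OrthonormalBasis (ι i) ℂ (Vi i))
    (Λ : Finset J) (lam : ℝ) (hlam : 0 ≤ lam)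
    (hΛ : ∀ j ∉ Λ, ‖repChar (σ j) m₀‖ ≤ lam * (Module.finrank ℂ (W j) : ℝ)) :
    ∑ i, (Module.finrank ℂ (Vi i) : ℝ) ^ 2 / (Fintype.card G : ℝ) ^ k *
        ((1 / (Module.finrank ℂ (Vi i) : ℝ)) *
          ∑ x : ι i,
            |(1 / (M.card : ℝ)) * ∑ m ∈ M, ‖invProj (ρi i) m (B i x)‖ ^ 2
              - ((2 : ℝ) ^ k)⁻¹|)
      ≤ lam + ∑ j ∈ Λ, (Module.finrank ℂ (W j) : ℝ) ^ 2 / (Fintype.card G : ℝ) := by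
  let dev (i : T) (x : ι i) : ℝ :=
    |1 / (M.card : ℝ) * ∑ m ∈ M, ‖invProj (ρi i) m (B i x)‖ ^ 2 - ((2 : ℝ) ^ k)⁻¹|
  let bound (I : Finset (Fin k)) (i : T) (x : ι i) : ℝ := lam + ∑ j ∈ Λ,
    ‖Representation.asAlgebraHom ((ρi i).comp (onIHom I)) (isotypicIdempotent (σ j)) (B i x)‖ ^ 2
  let P : ℝ := ∑ j ∈ Λ, (Module.finrank ℂ (W j) : ℝ) ^ 2 / Fintype.card G
  have hdev : dev ≤ ((2 : ℝ) ^ k)⁻¹ • ∑ I ∈ Finset.univ.erase ∅, bound I := fun i x ↦ by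
    simpa only [Pi.smul_apply, Finset.sum_apply, smul_eq_mul] using
      hfam.abs_average_norm_invProj_sq_sub_le hM (fun m hm ↦ (hinv m hm).1) hlam hΛ
        (hfam'.1 i) ((B i).norm_eq_one x)
  have hbound : ∀ I ∈ Finset.univ.erase ∅,
      plancherelMean (Fin k → G) Vi ι (bound I) = lam + P := fun I hI ↦
    hfam'.plancherelMean_const_add_sum_norm_isotypicIdempotent_sq B
      (onIHom_injective (Finset.nonempty_iff_ne_empty.2 (Finset.ne_of_mem_erase hI))) hfam lam Λ
  calc _ = plancherelMean (Fin k → G) Vi ι dev := by simp [plancherelMean_apply, dev]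
    _ ≤ ((2 : ℝ) ^ k)⁻¹ * ∑ _I ∈ Finset.univ.erase (∅ : Finset (Fin k)), (lam + P) := by
        rw [← Finset.sum_congr rfl hbound, ← map_sum, ← smul_eq_mul, ← map_smul]
        exact plancherelMean_mono hdev
    _ ≤ ((2 : ℝ) ^ k)⁻¹ * ∑ _I : Finset (Fin k), (lam + P) := by
        gcongr
        exact Finset.erase_subset _ _
    _ = lam + P := by simp [← mul_add]
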